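/- arXiv:math/0112122 — 5 statements merged into one kernel-verified Lean document; each statement's English description precedes it below -/
import Mathlib

section
/- The antipode axiom holds: m ∘ (S ⊗ id) ∘ Δ = η ∘ ε = m ∘ (id ⊗ S) ∘ Δ as ℂ-linear maps A → A, where m : A ⊗ A → A is the multiplication map and η : ℂ → A is the unit map k ↦ k·1. -/
/-!
Both `m ∘ (S ⊗ id) ∘ Δ` and `m ∘ (id ⊗ S) ∘ Δ` are linear, but not algebra homomorphisms, so the
comparison with `η ∘ ε` on generators has to be propagated by hand. The key point is that the
elements on which the identity holds are closed under multiplication: since `S` reverses products,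
`∑ S(a₁b₁) a₂b₂ = ∑ S(b₁) (∑ S(a₁) a₂) b₂`, and the inner sum is the scalar `ε(a)`; the other
side is symmetric (`leftConv_mul`, `rightConv_mul`). As `A` is generated by `x`, `x⁻¹`, `y`
(`QA.induction`), it remains to check these three, where the identity reads `x⁻¹x = 1 = xx⁻¹`
and `-x⁻¹y + x⁻¹y = 0 = y - xx⁻¹y`.
-/

open scoped TensorProduct
open MulOpposite

noncomputable section

/-- Relations for the extended quantum plane: `x*y = q•(y*x)`, `x*x⁻¹ = 1 = x⁻¹*x`.
Generators: `0 = x`, `1 = x⁻¹`, `2 = y`. -/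
inductive ARel (q : ℂ) : FreeAlgebra ℂ (Fin 3) → FreeAlgebra ℂ (Fin 3) → Prop
  | xy : ARel q (FreeAlgebra.ι ℂ 0 * FreeAlgebra.ι ℂ 2) (q • (FreeAlgebra.ι ℂ 2 * FreeAlgebra.ι ℂ 0))
  | xxinv : ARel q (FreeAlgebra.ι ℂ 0 * FreeAlgebra.ι ℂ 1) 1
  | xinvx : ARel q (FreeAlgebra.ι ℂ 1 * FreeAlgebra.ι ℂ 0) 1

/-- The (unital extension of the) quantum plane algebra `A`. -/
abbrev QA (q : ℂ) := RingQuot (ARel q)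

/-- The generator `x` of `A`. -/
def aX (q : ℂ) : QA q := RingQuot.mkAlgHom ℂ (ARel q) (FreeAlgebra.ι ℂ 0)

/-- The generator `x⁻¹` of `A`. -/
def aXinv (q : ℂ) : QA q := RingQuot.mkAlgHom ℂ (ARel q) (FreeAlgebra.ι ℂ 1)

/-- The generator `y` of `A`. -/
def aY (q : ℂ) : QA q := RingQuot.mkAlgHom ℂ (ARel q) (FreeAlgebra.ι ℂ 2)

/-- A predicate on `A` that holds on scalars and on the generators, and is stable under sums and
products, holds everywhere. -/
theorem QA.induction (q : ℂ) {P : QA q → Prop}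
    (algebraMap : ∀ c : ℂ, P (algebraMap ℂ (QA q) c))
    (x : P (aX q)) (xinv : P (aXinv q)) (y : P (aY q))
    (mul : ∀ a b, P a → P b → P (a * b)) (add : ∀ a b, P a → P b → P (a + b))
    (a : QA q) : P a := by
  obtain ⟨f, rfl⟩ := RingQuot.mkAlgHom_surjective ℂ (ARel q) a
  induction f using FreeAlgebra.induction with
  | grade0 c => simpa only [AlgHom.commutes] using algebraMap c
  | grade1 i =>
    fin_cases i
    · exact x
    · exact xinv
    · exact y
  | mul f g hf hg => simpa only [map_mul] using mul _ _ hf hg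
  | add f g hf hg => simpa only [map_add] using add _ _ hf hg

/-- Stated for an abstract ring because `mul_neg` does not rewrite directly in `QA q`, whose
negation comes from `RingQuot` instances that only unfold to the expected ones. -/
theorem mul_neg_mul_cancel {R : Type*} [Ring R] {a b : R} (h : a * b = 1) (c : R) :
    a * -(b * c) = -c := by
  rw [mul_neg, ← mul_assoc, h, one_mul]

section Convolution

variable {A : Type*} [Ring A] [Algebra ℂ A] (S : A →ₐ[ℂ] Aᵐᵒᵖ)

/-- The map `m ∘ (S ⊗ id)`, for an anti-homomorphism `S`. -/
def leftConv : A ⊗[ℂ] A →ₗ[ℂ] A :=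
  (LinearMap.mul' ℂ A).comp
    (TensorProduct.map ((opLinearEquiv ℂ).symm.toLinearMap.comp S.toLinearMap) LinearMap.id)

/-- The map `m ∘ (id ⊗ S)`, for an anti-homomorphism `S`. -/
def rightConv : A ⊗[ℂ] A →ₗ[ℂ] A :=
  (LinearMap.mul' ℂ A).comp
    (TensorProduct.map LinearMap.id ((opLinearEquiv ℂ).symm.toLinearMap.comp S.toLinearMap))

theorem leftConv_tmul (a b : A) : leftConv S (a ⊗ₜ b) = unop (S a) * b := by
  simp [leftConv]

theorem rightConv_tmul (a b : A) : rightConv S (a ⊗ₜ b) = a * unop (S b) := by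
  simp [rightConv]

theorem leftConv_mul_tmul (u : A ⊗[ℂ] A) (a b : A) :
    leftConv S (u * a ⊗ₜ b) = unop (S a) * leftConv S u * b := by
  induction u with
  | zero => simp
  | tmul c d => simp [leftConv_tmul, mul_assoc]
  | add u v hu hv => simp only [add_mul, mul_add, map_add, hu, hv]

theorem rightConv_tmul_mul (v : A ⊗[ℂ] A) (a b : A) :
    rightConv S (a ⊗ₜ b * v) = a * rightConv S v * unop (S b) := by
  induction v with
  | zero => simp
  | tmul c d => simp [rightConv_tmul, mul_assoc]
  | add u v hu hv => simp only [add_mul, mul_add, map_add, hu, hv]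

theorem leftConv_mul {u : A ⊗[ℂ] A} {c : ℂ} (hu : leftConv S u = algebraMap ℂ A c)
    (v : A ⊗[ℂ] A) : leftConv S (u * v) = algebraMap ℂ A c * leftConv S v := by
  induction v with
  | zero => simp
  | tmul a b => rw [leftConv_mul_tmul, hu, leftConv_tmul, ← Algebra.commutes, mul_assoc]
  | add v w hv hw => simp only [mul_add, map_add, hv, hw]

theorem rightConv_mul (u : A ⊗[ℂ] A) {v : A ⊗[ℂ] A} {c : ℂ}
    (hv : rightConv S v = algebraMap ℂ A c) :
    rightConv S (u * v) = rightConv S u * algebraMap ℂ A c := by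
  induction u with
  | zero => simp
  | tmul a b =>
    rw [rightConv_tmul_mul, hv, rightConv_tmul, mul_assoc, mul_assoc, Algebra.commutes]
  | add v w hv hw => simp only [add_mul, map_add, hv, hw]

theorem leftConv_algebraMap (c : ℂ) :
    leftConv S (algebraMap ℂ (A ⊗[ℂ] A) c) = algebraMap ℂ A c := by
  simp [Algebra.TensorProduct.algebraMap_apply, leftConv_tmul, MulOpposite.algebraMap_apply]

theorem rightConv_algebraMap (c : ℂ) :
    rightConv S (algebraMap ℂ (A ⊗[ℂ] A) c) = algebraMap ℂ A c := by
  simp [Algebra.TensorProduct.algebraMap_apply, rightConv_tmul]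

end Convolution

theorem aX_mul_aXinv (q : ℂ) : aX q * aXinv q = 1 := by
  rw [aX, aXinv, ← map_mul, RingQuot.mkAlgHom_rel ℂ ARel.xxinv, map_one]

theorem aXinv_mul_aX (q : ℂ) : aXinv q * aX q = 1 := by
  rw [aX, aXinv, ← map_mul, RingQuot.mkAlgHom_rel ℂ ARel.xinvx, map_one]

/-- The antipode axiom: `m ∘ (S ⊗ id) ∘ Δ = η ∘ ε = m ∘ (id ⊗ S) ∘ Δ` as ℂ-linear maps
`A → A`, where `m` is multiplication and `η : ℂ → A` is the unit map. -/
theorem antipode_axiom (q : ℂ) (hq : q ≠ 0)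
    (Δ : QA q →ₐ[ℂ] QA q ⊗[ℂ] QA q)
    (hΔx : Δ (aX q) = aX q ⊗ₜ[ℂ] aX q)
    (hΔxinv : Δ (aXinv q) = aXinv q ⊗ₜ[ℂ] aXinv q)
    (hΔy : Δ (aY q) = aY q ⊗ₜ[ℂ] 1 + aX q ⊗ₜ[ℂ] aY q)
    (ε : QA q →ₐ[ℂ] ℂ)
    (hεx : ε (aX q) = 1) (hεxinv : ε (aXinv q) = 1) (hεy : ε (aY q) = 0)
    (S : QA q →ₐ[ℂ] (QA q)ᵐᵒᵖ)
    (hSx : S (aX q) = op (aXinv q)) (hSxinv : S (aXinv q) = op (aX q))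
    (hSy : S (aY q) = op (-(aXinv q * aY q))) :
    (LinearMap.mul' ℂ (QA q)).comp
        ((TensorProduct.map ((opLinearEquiv ℂ).symm.toLinearMap.comp S.toLinearMap)
            LinearMap.id).comp Δ.toLinearMap) =
      (Algebra.linearMap ℂ (QA q)).comp ε.toLinearMap ∧
    (LinearMap.mul' ℂ (QA q)).comp
        ((TensorProduct.map LinearMap.id
            ((opLinearEquiv ℂ).symm.toLinearMap.comp S.toLinearMap)).comp Δ.toLinearMap) =
      (Algebra.linearMap ℂ (QA q)).comp ε.toLinearMap := by
  constructor
  · ext a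
    change leftConv S (Δ a) = algebraMap ℂ (QA q) (ε a)
    induction a using QA.induction with
    | algebraMap c => simp only [AlgHom.commutes, leftConv_algebraMap, Algebra.algebraMap_self_apply]
    | x => simp [hΔx, hεx, leftConv_tmul, hSx, aXinv_mul_aX]
    | xinv => simp [hΔxinv, hεxinv, leftConv_tmul, hSxinv, aX_mul_aXinv]
    | y => simp [hΔy, hεy, leftConv_tmul, hSx, hSy]
    | mul a b ha hb => rw [map_mul, leftConv_mul S ha, hb, map_mul, map_mul]
    | add a b ha hb => simp only [map_add, ha, hb]
  · ext a
    change rightConv S (Δ a) = algebraMap ℂ (QA q) (ε a)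
    induction a using QA.induction with
    | algebraMap c => simp only [AlgHom.commutes, rightConv_algebraMap, Algebra.algebraMap_self_apply]
    | x => simp [hΔx, hεx, rightConv_tmul, hSx, aX_mul_aXinv]
    | xinv => simp [hΔxinv, hεxinv, rightConv_tmul, hSxinv, aXinv_mul_aX]
    | y =>
      have h : aX q * -(aXinv q * aY q) = -aY q :=
        mul_neg_mul_cancel (aX_mul_aXinv q) (aY q)
      simp [hΔy, hεy, rightConv_tmul, hSy, h]
    | mul a b ha hb => rw [map_mul, rightConv_mul S _ hb, ha, map_mul, map_mul]
    | add a b ha hb => simp only [map_add, ha, hb]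
end
end

section
/- The antipode squared acts on y by S²(y) = q⁻¹·y; consequently, if q ≠ 1 and A is not trivial on y (i.e. y ≠ q⁻¹·y in A), then S² ≠ id. -/
/-!
Since `S` reverses products, `S²(y) = S(-x⁻¹ y) = -S(y) S(x⁻¹) = x⁻¹ y x`, and the relation
`x y = q y x` turns this into `q⁻¹ y` (`aXinv_mul_aY_mul_aX`). Evaluating `S² = id` at `y` would
then give `y = q⁻¹ y`.
-/

open scoped TensorProduct
open MulOpposite

noncomputable section

/-- Conjugating the relation `x * y = q • (y * x)` by `x⁻¹`. -/
theorem aXinv_mul_aY_mul_aX (q : ℂ) (hq : q ≠ 0) :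
    aXinv q * aY q * aX q = q⁻¹ • aY q := by
  have hxy : aX q * aY q = q • (aY q * aX q) := by
    simpa [aX, aY] using RingQuot.mkAlgHom_rel ℂ (ARel.xy (q := q))
  have hinv : aXinv q * aX q = 1 := by
    simpa [aX, aXinv] using RingQuot.mkAlgHom_rel ℂ (ARel.xinvx (q := q))
  have hyx : aY q * aX q = q⁻¹ • (aX q * aY q) := by
    rw [hxy, inv_smul_smul₀ hq]
  rw [mul_assoc, hyx, mul_smul_comm, ← mul_assoc, hinv, one_mul]

/-- `S²(y) = q⁻¹·y`; consequently if `q ≠ 1` and `y ≠ q⁻¹·y` in `A`, then `S² ≠ id`. -/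
theorem antipode_square (q : ℂ) (hq : q ≠ 0)
    (S : QA q →ₐ[ℂ] (QA q)ᵐᵒᵖ)
    (hSx : S (aX q) = op (aXinv q)) (hSxinv : S (aXinv q) = op (aX q))
    (hSy : S (aY q) = op (-(aXinv q * aY q))) :
    (S ((S (aY q)).unop)).unop = q⁻¹ • aY q ∧
    (q ≠ 1 → aY q ≠ q⁻¹ • aY q →
      (fun a : QA q => (S ((S a).unop)).unop) ≠ id) := by
  have hS : (S ((S (aY q)).unop)).unop = q⁻¹ • aY q := by
    rw [hSy, unop_op, map_neg, map_mul, hSxinv, hSy, ← op_mul, ← op_neg, unop_op]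
    -- The semiring and ring instances on `RingQuot` agree only after unfolding, so the sign
    -- rule is supplied as a term.
    have hneg : -(-(aXinv q * aY q) * aX q) = aXinv q * aY q * aX q :=
      (congrArg Neg.neg (neg_mul (aXinv q * aY q) (aX q))).trans (neg_neg _)
    exact hneg.trans (aXinv_mul_aY_mul_aX q hq)
  refine ⟨hS, fun _ hy hid => hy ?_⟩
  rw [← hS]
  exact (congrFun hid (aY q)).symm
end
end

section
/- There exists a unique ℂ-algebra anti-homomorphism Ŝ : Γ → Γ (equivalently, a ℂ-algebra homomorphism Γ → Γᵐᵒᵖ) satisfying Ŝ(x) = x⁻¹, Ŝ(x⁻¹) = x, Ŝ(y) = −x⁻¹·y, Ŝ(dx) = −x⁻¹·dx·x⁻¹, and Ŝ(dy) = x⁻¹·dx·x⁻¹·y − x⁻¹·dy. (In particular these assignments preserve all the defining relations of Γ.) -/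
/-!
Existence follows from the universal property of `Γ` (`exists_algHom_of_isGammaTuple`) once the
prescribed images are known to satisfy the defining relations in `Γᵐᵒᵖ`; uniqueness holds because
`Γ` is generated by `x, x⁻¹, y, dx, dy` (`algHom_ext_gen`).

The relations are checked in `IsGammaTuple.antipode`. Conjugating by `x⁻¹` gives
`x⁻¹ y = q⁻¹ y x⁻¹`, `x⁻¹ dx = q dx x⁻¹` and `x⁻¹ dy = dy x⁻¹`, so every product can be rewritten
as a combination of monomials ordered as `dx, dy, y, x⁻¹`. In that form the images are
`-q⁻¹ y x⁻¹`, `-q dx x⁻²` and `q⁻¹ dx y x⁻² - dy x⁻¹` for `y`, `dx`, `dy`, and each relation becomes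
an identity between rational functions of `q`.
-/

open scoped TensorProduct
open MulOpposite

noncomputable section

/-- Relations for the differential algebra `Γ` of the extended quantum plane.
Generators: `0 = x`, `1 = x⁻¹`, `2 = y`, `3 = dx`, `4 = dy`. -/
inductive GRel (q : ℂ) : FreeAlgebra ℂ (Fin 5) → FreeAlgebra ℂ (Fin 5) → Prop
  | xy : GRel q (FreeAlgebra.ι ℂ 0 * FreeAlgebra.ι ℂ 2) (q • (FreeAlgebra.ι ℂ 2 * FreeAlgebra.ι ℂ 0))
  | xxinv : GRel q (FreeAlgebra.ι ℂ 0 * FreeAlgebra.ι ℂ 1) 1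
  | xinvx : GRel q (FreeAlgebra.ι ℂ 1 * FreeAlgebra.ι ℂ 0) 1
  | xdx : GRel q (FreeAlgebra.ι ℂ 0 * FreeAlgebra.ι ℂ 3) (q⁻¹ • (FreeAlgebra.ι ℂ 3 * FreeAlgebra.ι ℂ 0))
  | xdy : GRel q (FreeAlgebra.ι ℂ 0 * FreeAlgebra.ι ℂ 4) (FreeAlgebra.ι ℂ 4 * FreeAlgebra.ι ℂ 0)
  | ydx : GRel q (FreeAlgebra.ι ℂ 2 * FreeAlgebra.ι ℂ 3)
      (q⁻¹ • (FreeAlgebra.ι ℂ 3 * FreeAlgebra.ι ℂ 2) +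
        (q⁻¹ - 1) • (FreeAlgebra.ι ℂ 4 * FreeAlgebra.ι ℂ 0))
  | ydy : GRel q (FreeAlgebra.ι ℂ 2 * FreeAlgebra.ι ℂ 4) (q⁻¹ • (FreeAlgebra.ι ℂ 4 * FreeAlgebra.ι ℂ 2))
  | dxdx : GRel q (FreeAlgebra.ι ℂ 3 * FreeAlgebra.ι ℂ 3) 0
  | dxdy : GRel q (FreeAlgebra.ι ℂ 3 * FreeAlgebra.ι ℂ 4) (-(FreeAlgebra.ι ℂ 4 * FreeAlgebra.ι ℂ 3))
  | dydy : GRel q (FreeAlgebra.ι ℂ 4 * FreeAlgebra.ι ℂ 4) 0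

/-- The differential algebra `Γ` of the extended quantum plane. -/
abbrev QG (q : ℂ) := RingQuot (GRel q)

/-- The generator `x` of `Γ`. -/
def gX (q : ℂ) : QG q := RingQuot.mkAlgHom ℂ (GRel q) (FreeAlgebra.ι ℂ 0)

/-- The generator `x⁻¹` of `Γ`. -/
def gXinv (q : ℂ) : QG q := RingQuot.mkAlgHom ℂ (GRel q) (FreeAlgebra.ι ℂ 1)

/-- The generator `y` of `Γ`. -/
def gY (q : ℂ) : QG q := RingQuot.mkAlgHom ℂ (GRel q) (FreeAlgebra.ι ℂ 2)

/-- The generator `dx` of `Γ`. -/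
def gDX (q : ℂ) : QG q := RingQuot.mkAlgHom ℂ (GRel q) (FreeAlgebra.ι ℂ 3)

/-- The generator `dy` of `Γ`. -/
def gDY (q : ℂ) : QG q := RingQuot.mkAlgHom ℂ (GRel q) (FreeAlgebra.ι ℂ 4)

/-- The defining relations of `Γ` for five elements of a `ℂ`-algebra, where `u` plays the role
of `x⁻¹`, `a` that of `dx` and `b` that of `dy`. -/
structure IsGammaTuple (q : ℂ) {A : Type*} [Ring A] [Algebra ℂ A] (x u y a b : A) : Prop where
  xy : x * y = q • (y * x)
  xu : x * u = 1
  ux : u * x = 1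
  xa : x * a = q⁻¹ • (a * x)
  xb : x * b = b * x
  ya : y * a = q⁻¹ • (a * y) + (q⁻¹ - 1) • (b * x)
  yb : y * b = q⁻¹ • (b * y)
  aa : a * a = 0
  ab : a * b = -(b * a)
  bb : b * b = 0

theorem isGammaTuple_gen (q : ℂ) :
    IsGammaTuple q (gX q) (gXinv q) (gY q) (gDX q) (gDY q) where
  xy := by
    simpa [gX, gXinv, gY, gDX, gDY] using RingQuot.mkAlgHom_rel ℂ (GRel.xy (q := q))
  xu := by
    simpa [gX, gXinv, gY, gDX, gDY] using RingQuot.mkAlgHom_rel ℂ (GRel.xxinv (q := q))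
  ux := by
    simpa [gX, gXinv, gY, gDX, gDY] using RingQuot.mkAlgHom_rel ℂ (GRel.xinvx (q := q))
  xa := by
    simpa [gX, gXinv, gY, gDX, gDY] using RingQuot.mkAlgHom_rel ℂ (GRel.xdx (q := q))
  xb := by
    simpa [gX, gXinv, gY, gDX, gDY] using RingQuot.mkAlgHom_rel ℂ (GRel.xdy (q := q))
  ya := by
    have h := RingQuot.mkAlgHom_rel ℂ (GRel.ydx (q := q))
    rw [map_add, map_smul, map_smul, map_mul, map_mul, map_mul] at h
    exact h
  yb := by
    simpa [gX, gXinv, gY, gDX, gDY] using RingQuot.mkAlgHom_rel ℂ (GRel.ydy (q := q))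
  aa := by
    simpa [gX, gXinv, gY, gDX, gDY] using RingQuot.mkAlgHom_rel ℂ (GRel.dxdx (q := q))
  ab := by
    simpa [gX, gXinv, gY, gDX, gDY] using RingQuot.mkAlgHom_rel ℂ (GRel.dxdy (q := q))
  bb := by
    simpa [gX, gXinv, gY, gDX, gDY] using RingQuot.mkAlgHom_rel ℂ (GRel.dydy (q := q))

/-- The universal property of `Γ`: a tuple satisfying the defining relations in an algebra `A`
is the image of the generators under an algebra homomorphism `Γ → A`. -/
theorem exists_algHom_of_isGammaTuple {q : ℂ} {A : Type*} [Ring A] [Algebra ℂ A]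
    {x u y a b : A} (h : IsGammaTuple q x u y a b) :
    ∃ S : QG q →ₐ[ℂ] A, S (gX q) = x ∧ S (gXinv q) = u ∧ S (gY q) = y ∧
      S (gDX q) = a ∧ S (gDY q) = b := by
  have hrel : ∀ ⦃s t⦄, GRel q s t → FreeAlgebra.lift ℂ ![x, u, y, a, b] s =
      FreeAlgebra.lift ℂ ![x, u, y, a, b] t := by
    intro s t hst
    cases hst with
    | xy => simpa using h.xy
    | xxinv => simpa using h.xu
    | xinvx => simpa using h.ux
    | xdx => simpa using h.xa
    | xdy => simpa using h.xb
    | ydx =>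
      rw [map_add, map_smul, map_smul, map_mul, map_mul, map_mul]
      simp only [FreeAlgebra.lift_ι_apply]
      exact h.ya
    | ydy => simpa using h.yb
    | dxdx => simpa using h.aa
    | dxdy => simpa using h.ab
    | dydy => simpa using h.bb
  refine ⟨RingQuot.liftAlgHom ℂ ⟨FreeAlgebra.lift ℂ ![x, u, y, a, b], hrel⟩, ?_⟩
  simp [gX, gXinv, gY, gDX, gDY, RingQuot.liftAlgHom_mkAlgHom_apply]

theorem algHom_ext_gen {q : ℂ} {A : Type*} [Ring A] [Algebra ℂ A] {S T : QG q →ₐ[ℂ] A}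
    (hx : S (gX q) = T (gX q)) (hu : S (gXinv q) = T (gXinv q)) (hy : S (gY q) = T (gY q))
    (ha : S (gDX q) = T (gDX q)) (hb : S (gDY q) = T (gDY q)) : S = T := by
  apply RingQuot.ringQuot_ext'
  apply FreeAlgebra.hom_ext
  funext i
  fin_cases i
  exacts [hx, hu, hy, ha, hb]

section Antipode

variable {q : ℂ} {A : Type*} [Ring A] [Algebra ℂ A] {x u y a b : A}

/-- The relation `u y = q⁻¹ y u`, obtained by conjugating `x y = q y x` with `u = x⁻¹`. -/
theorem IsGammaTuple.uy (h : IsGammaTuple q x u y a b) (hq : q ≠ 0) :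
    u * y = q⁻¹ • (y * u) := by
  have e : u * (x * y) * u = q • (u * y) := by
    rw [h.xy, mul_smul_comm, smul_mul_assoc, mul_assoc, mul_assoc, h.xu, mul_one]
  rw [← mul_assoc, h.ux, one_mul] at e
  rw [e, smul_smul, inv_mul_cancel₀ hq, one_smul]

/-- The relation `u a = q a u`, obtained by conjugating `x a = q⁻¹ a x` with `u = x⁻¹`. -/
theorem IsGammaTuple.ua (h : IsGammaTuple q x u y a b) (hq : q ≠ 0) :
    u * a = q • (a * u) := by
  have e : u * (x * a) * u = q⁻¹ • (u * a) := by
    rw [h.xa, mul_smul_comm, smul_mul_assoc, mul_assoc, mul_assoc, h.xu, mul_one]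
  rw [← mul_assoc, h.ux, one_mul] at e
  rw [e, smul_smul, mul_inv_cancel₀ hq, one_smul]

theorem IsGammaTuple.ub (h : IsGammaTuple q x u y a b) : u * b = b * u := by
  have e : u * (x * b) * u = u * b := by
    rw [h.xb, mul_assoc, mul_assoc, h.xu, mul_one]
  rw [← e, ← mul_assoc, h.ux, one_mul]

/-- A relation `p * r = t` in the form that rewrites inside right-nested products. -/
theorem mul_mul_eq_of_mul_eq {M : Type*} [Semigroup M] {p r t : M} (h : p * r = t) (z : M) :
    p * (r * z) = t * z := by
  rw [← mul_assoc, h]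

/-- The proposed antipode values satisfy the relations of `Γ` in the opposite algebra. Both sides
of each relation are brought to the normal form in which monomials are ordered as
`a, b, y, u`; the identity then reduces to one between coefficients in `ℂ`. -/
theorem IsGammaTuple.antipode (h : IsGammaTuple q x u y a b) (hq : q ≠ 0) :
    IsGammaTuple q (op u) (op x) (op (-(u * y))) (op (-(u * a * u)))
      (op (u * a * u * y - u * b)) := by
  have ba : b * a = -(a * b) := by rw [h.ab, neg_neg]
  have uy := h.uy hq
  have ua := h.ua hq
  have ub := h.ub
  have xy' := mul_mul_eq_of_mul_eq h.xy
  have xu' := mul_mul_eq_of_mul_eq h.xu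
  have ya' := mul_mul_eq_of_mul_eq h.ya
  have yb' := mul_mul_eq_of_mul_eq h.yb
  have aa' := mul_mul_eq_of_mul_eq h.aa
  have bb' := mul_mul_eq_of_mul_eq h.bb
  have ba' := mul_mul_eq_of_mul_eq ba
  have uy' := mul_mul_eq_of_mul_eq uy
  have ua' := mul_mul_eq_of_mul_eq ua
  have ub' := mul_mul_eq_of_mul_eq ub
  constructor <;> apply unop_injective <;>
    simp only [unop_mul, unop_op, unop_smul, unop_add, unop_neg, unop_one, unop_zero,
      mul_assoc, mul_add, add_mul, mul_sub, sub_mul, mul_neg, neg_mul, one_mul,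
      zero_mul, smul_zero, smul_neg, smul_add, smul_sub, neg_neg,
      mul_smul_comm, smul_mul_assoc, h.xu, h.ux, uy, ua, ub,
      xy', xu', ya', yb', aa', bb', ba', uy', ua', ub'] <;>
    match_scalars <;> field_simp <;> ring

end Antipode

/-- There exists a unique ℂ-algebra anti-homomorphism `Ŝ : Γ → Γ` (a ℂ-algebra
homomorphism `Γ → Γᵐᵒᵖ`) with `Ŝ(x) = x⁻¹`, `Ŝ(x⁻¹) = x`, `Ŝ(y) = -x⁻¹·y`,
`Ŝ(dx) = -x⁻¹·dx·x⁻¹`, `Ŝ(dy) = x⁻¹·dx·x⁻¹·y - x⁻¹·dy`. -/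
theorem hat_antipode_exists_unique (q : ℂ) (hq : q ≠ 0) :
    ∃! S : QG q →ₐ[ℂ] (QG q)ᵐᵒᵖ,
      S (gX q) = op (gXinv q) ∧
      S (gXinv q) = op (gX q) ∧
      S (gY q) = op (-(gXinv q * gY q)) ∧
      S (gDX q) = op (-(gXinv q * gDX q * gXinv q)) ∧
      S (gDY q) = op (gXinv q * gDX q * gXinv q * gY q - gXinv q * gDY q) := by
  obtain ⟨S, hS⟩ := exists_algHom_of_isGammaTuple ((isGammaTuple_gen q).antipode hq)
  refine ⟨S, hS, ?_⟩
  rintro T ⟨hx, hu, hy, ha, hb⟩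
  obtain ⟨hx', hu', hy', ha', hb'⟩ := hS
  exact algHom_ext_gen (hx.trans hx'.symm) (hu.trans hu'.symm) (hy.trans hy'.symm)
    (ha.trans ha'.symm) (hb.trans hb'.symm)
end
end

section
/- In Γ, the forms θ := dx·x⁻¹ and φ := dy − dx·x⁻¹·y satisfy y·θ = q⁻¹·θ·y + (q⁻¹ − 1)·φ and y·φ = φ·y. -/
/-!
From `x·y = q·y·x` one gets `y·x⁻¹ = q·x⁻¹·y`, so multiplying the relation for `y·dx` by `x⁻¹` on the
right gives `y·θ = θ·y + (q⁻¹ - 1)·dy` (`gY_mul_theta`). Since `φ = dy - θ·y`, both claims follow from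
this and `y·dy = q⁻¹·dy·y` by linear algebra.
-/

open scoped TensorProduct
open MulOpposite

noncomputable section

/-- The form `θ = dx·x⁻¹` in `Γ`. -/
def theta (q : ℂ) : QG q := gDX q * gXinv q

/-- The form `φ = dy - dx·x⁻¹·y` in `Γ`. -/
def phi (q : ℂ) : QG q := gDY q - gDX q * gXinv q * gY q

theorem gX_mul_gY (q : ℂ) : gX q * gY q = q • (gY q * gX q) := by
  simpa [gX, gY] using RingQuot.mkAlgHom_rel ℂ (GRel.xy (q := q))

theorem gX_mul_gXinv (q : ℂ) : gX q * gXinv q = 1 := by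
  simpa [gX, gXinv] using RingQuot.mkAlgHom_rel ℂ (GRel.xxinv (q := q))

theorem gXinv_mul_gX (q : ℂ) : gXinv q * gX q = 1 := by
  simpa [gX, gXinv] using RingQuot.mkAlgHom_rel ℂ (GRel.xinvx (q := q))

theorem gY_mul_gDX (q : ℂ) :
    gY q * gDX q = q⁻¹ • (gDX q * gY q) + (q⁻¹ - 1) • (gDY q * gX q) := by
  simpa only [gX, gY, gDX, gDY, map_mul, map_add, map_smul] using
    RingQuot.mkAlgHom_rel ℂ (GRel.ydx (q := q))

theorem gY_mul_gDY (q : ℂ) : gY q * gDY q = q⁻¹ • (gDY q * gY q) := by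
  simpa only [gY, gDY, map_mul, map_smul] using RingQuot.mkAlgHom_rel ℂ (GRel.ydy (q := q))

theorem gY_mul_gXinv (q : ℂ) : gY q * gXinv q = q • (gXinv q * gY q) := by
  calc gY q * gXinv q = gXinv q * (gX q * gY q) * gXinv q := by
        rw [← mul_assoc, gXinv_mul_gX, one_mul]
    _ = q • (gXinv q * gY q * (gX q * gXinv q)) := by
        rw [gX_mul_gY, mul_smul_comm, smul_mul_assoc]
        simp only [mul_assoc]
    _ = q • (gXinv q * gY q) := by rw [gX_mul_gXinv, mul_one]

theorem gY_mul_theta (q : ℂ) (hq : q ≠ 0) :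
    gY q * theta q = theta q * gY q + (q⁻¹ - 1) • gDY q := by
  rw [theta, ← mul_assoc, gY_mul_gDX, add_mul, smul_mul_assoc, smul_mul_assoc, mul_assoc, mul_assoc,
    gY_mul_gXinv, gX_mul_gXinv, mul_one, mul_smul_comm, smul_smul, inv_mul_cancel₀ hq, one_smul,
    mul_assoc]

theorem phi_eq (q : ℂ) : phi q = gDY q - theta q * gY q := rfl

/-- In `Γ`: `y·θ = q⁻¹·θ·y + (q⁻¹ - 1)·φ` and `y·φ = φ·y`. -/
theorem y_theta_phi_relations (q : ℂ) (hq : q ≠ 0) :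
    gY q * theta q = q⁻¹ • (theta q * gY q) + (q⁻¹ - 1) • phi q ∧
    gY q * phi q = phi q * gY q := by
  refine ⟨?_, ?_⟩
  · rw [gY_mul_theta q hq, phi_eq]
    module
  · rw [phi_eq, mul_sub, sub_mul, ← mul_assoc, gY_mul_theta q hq, gY_mul_gDY, add_mul,
      smul_mul_assoc]
    module
end
end

section
/- In Γ, the forms θ := dx·x⁻¹ and φ := dy − dx·x⁻¹·y satisfy θ² = 0, φ² = 0, and θ·φ = −q·φ·θ. -/
/-!
In `Γ` the relations move `x⁻¹` and `y` to the right of the differentials: `x⁻¹·dx = q·dx·x⁻¹`,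
`x⁻¹·dy = dy·x⁻¹`, and the key identity `θ·y·θ = (q⁻¹ - 1)·θ·dy` with `θ·dy = -dy·θ`.
Thus `θ·φ = θ·dy = -dy·θ` while `φ·θ = dy·θ - θ·y·θ = q⁻¹·dy·θ`, and the four terms of `φ²`
are multiples of `dy·θ·y` whose coefficients `-1`, `q⁻¹`, `-(q⁻¹ - 1)` (with `dy² = 0`) add up
to zero.
-/

open scoped TensorProduct
open MulOpposite

noncomputable section

/-- The computation in an arbitrary algebra containing elements `x, u = x⁻¹, y, a = dx, b = dy`
that satisfy the defining relations of `Γ` used by it. -/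
theorem theta_phi_of_relations {R : Type*} [Ring R] [Algebra ℂ R] {q : ℂ} (hq : q ≠ 0)
    {x u y a b : R} (xu : x * u = 1) (ux : u * x = 1) (xa : x * a = q⁻¹ • (a * x))
    (xb : x * b = b * x) (ya : y * a = q⁻¹ • (a * y) + (q⁻¹ - 1) • (b * x))
    (yb : y * b = q⁻¹ • (b * y)) (aa : a * a = 0) (ab : a * b = -(b * a)) (bb : b * b = 0) :
    (a * u) ^ 2 = 0 ∧ (b - a * u * y) ^ 2 = 0 ∧
      a * u * (b - a * u * y) = -(q • ((b - a * u * y) * (a * u))) := by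
  have ua : u * a = q • (a * u) := by
    have h : a * u = q⁻¹ • (u * a) := by
      calc a * u = u * x * a * u := by rw [ux, one_mul]
        _ = u * (x * a) * u := by simp only [mul_assoc]
        _ = q⁻¹ • (u * a * (x * u)) := by
          rw [xa]; simp only [mul_smul_comm, smul_mul_assoc, mul_assoc]
        _ = q⁻¹ • (u * a) := by rw [xu, mul_one]
    rw [h, smul_smul, mul_inv_cancel₀ hq, one_smul]
  have ub : u * b = b * u := by
    calc u * b = u * b * (x * u) := by rw [xu, mul_one]
      _ = u * (b * x) * u := by simp only [mul_assoc]
      _ = u * x * (b * u) := by rw [← xb]; simp only [mul_assoc]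
      _ = b * u := by rw [ux, one_mul]
  have aua : a * u * a = 0 := by
    rw [mul_assoc, ua, mul_smul_comm, ← mul_assoc, aa, zero_mul, smul_zero]
  have aub : a * u * b = -(b * (a * u)) := by
    rw [mul_assoc, ub, ← mul_assoc, ab, neg_mul, mul_assoc]
  have tt : a * u * (a * u) = 0 := by rw [← mul_assoc, aua, zero_mul]
  have tyt : a * u * y * (a * u) = -((q⁻¹ - 1) • (b * (a * u))) := by
    calc a * u * y * (a * u) = a * u * (y * a) * u := by simp only [mul_assoc]
      _ = q⁻¹ • (a * u * a * (y * u)) + (q⁻¹ - 1) • (a * u * b * (x * u)) := by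
        rw [ya]
        simp only [mul_add, add_mul, mul_smul_comm, smul_mul_assoc, mul_assoc]
      _ = -((q⁻¹ - 1) • (b * (a * u))) := by
        rw [aua, aub, xu, zero_mul, smul_zero, zero_add, mul_one, smul_neg]
  have tyb : a * u * y * b = -(q⁻¹ • (b * (a * u) * y)) := by
    rw [mul_assoc, yb, mul_smul_comm, ← mul_assoc, aub, neg_mul, smul_neg]
  refine ⟨by rw [sq, tt], ?_, ?_⟩
  · have e : (b - a * u * y) ^ 2 =
        b * b - b * (a * u) * y - a * u * y * b + a * u * y * (a * u) * y := by
      noncomm_ring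
    rw [e, bb, tyb, tyt, neg_mul, smul_mul_assoc]
    module
  · rw [mul_sub, sub_mul, tyt, ← mul_assoc (a * u) (a * u) y, tt, aub, zero_mul, sub_zero]
    have e : b * (a * u) - -((q⁻¹ - 1) • (b * (a * u))) = q⁻¹ • (b * (a * u)) := by module
    rw [e, smul_smul, mul_inv_cancel₀ hq, one_smul]

/-- In `Γ`: `θ² = 0`, `φ² = 0` and `θ·φ = -q·φ·θ`. -/
theorem theta_phi_commutation (q : ℂ) (hq : q ≠ 0) :
    theta q ^ 2 = 0 ∧ phi q ^ 2 = 0 ∧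
    theta q * phi q = -(q • (phi q * theta q)) := by
  have rel {v w} (h : GRel q v w) := RingQuot.mkAlgHom_rel ℂ h
  refine theta_phi_of_relations (x := gX q) (u := gXinv q) (y := gY q) (a := gDX q) (b := gDY q) hq
    ?_ ?_ ?_ ?_ ?_ ?_ ?_ ?_ ?_
  · simpa [gX, gXinv, gY, gDX, gDY] using rel .xxinv
  · simpa [gX, gXinv, gY, gDX, gDY] using rel .xinvx
  · simpa [gX, gXinv, gY, gDX, gDY] using rel .xdx
  · simpa [gX, gXinv, gY, gDX, gDY] using rel .xdy
  · simpa [gX, gXinv, gY, gDX, gDY] using rel .ydx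
  · simpa [gX, gXinv, gY, gDX, gDY] using rel .ydy
  · simpa [gX, gXinv, gY, gDX, gDY] using rel .dxdx
  · simpa [gX, gXinv, gY, gDX, gDY] using rel .dxdy
  · simpa [gX, gXinv, gY, gDX, gDY] using rel .dydy
end
end
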